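/- (Mackey-type decomposition for Hecke-like towers.) Let n, m, k, ℓ, N ∈ ℕ with n + m = k + ℓ = N. For each r with max(0, n−ℓ) ≤ r ≤ min(n, k), let w_r ∈ S_N be defined by w_r(i) = i for 1 ≤ i ≤ r, w_r(i) = i − r + k for r < i ≤ n, w_r(i) = i − n + r for n < i ≤ n + k − r, and w_r(i) = i for n + k − r < i ≤ N, and let B'_r ⊆ B_N be the F-linear span of {ρ_{k,ℓ}(u) · T_{w_r} · ρ_{n,m}(v) : u ∈ B_k ⊗ B_ℓ, v ∈ B_n ⊗ B_m}. Then B_N is the internal direct sum of the subspaces B'_r over max(0, n−ℓ) ≤ r ≤ min(n, k), and dim_F B'_r = n! · m! · C(k, r) · C(ℓ, n−r), where C(·,·) denotes the binomial coefficient. -/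

import Mathlib

open scoped TensorProduct

namespace HeckeLikeTower

variable (F : Type*) [Field F]

/-- The defining relations of the Hecke-like algebra of degree `n` over `F` with parameters
`c, d`.  The generators `T_1, …, T_{n-1}` are indexed by `Fin (n-1)`, where the index
`i : Fin (n-1)` corresponds to the generator `T_{i+1}`. -/
inductive Rel (c d : F) (n : ℕ) :
    FreeAlgebra F (Fin (n - 1)) → FreeAlgebra F (Fin (n - 1)) → Prop
  | comm (i j : Fin (n - 1)) (h : (i : ℕ) + 1 < (j : ℕ)) :
      Rel c d n (FreeAlgebra.ι F i * FreeAlgebra.ι F j)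
        (FreeAlgebra.ι F j * FreeAlgebra.ι F i)
  | braid (i j : Fin (n - 1)) (h : (j : ℕ) = (i : ℕ) + 1) :
      Rel c d n (FreeAlgebra.ι F i * FreeAlgebra.ι F j * FreeAlgebra.ι F i)
        (FreeAlgebra.ι F j * FreeAlgebra.ι F i * FreeAlgebra.ι F j)
  | quad (i : Fin (n - 1)) :
      Rel c d n (FreeAlgebra.ι F i * FreeAlgebra.ι F i)
        (c • FreeAlgebra.ι F i + algebraMap F (FreeAlgebra F (Fin (n - 1))) d)

/-- The Hecke-like algebra `B_n` of degree `n` over `F` with parameters `c, d`: the quotient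
of the free associative unital `F`-algebra on `T_1, …, T_{n-1}` by the two-sided ideal
generated by the relations. -/
abbrev B (c d : F) (n : ℕ) : Type _ := RingQuot (Rel F c d n)

/-- The generator `T_{i+1}` of the Hecke-like algebra `B_n` (for `i : Fin (n-1)`). -/
def T (c d : F) (n : ℕ) (i : Fin (n - 1)) : B F c d n :=
  RingQuot.mkAlgHom F (Rel F c d n) (FreeAlgebra.ι F i)

/-- The adjacent transposition `s_{i+1} = (i+1, i+2) ∈ S_n` (for `i : Fin (n-1)`), acting on
`Fin n` by swapping `i` and `i+1` (`0`-based). -/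
def s (n : ℕ) (i : Fin (n - 1)) : Equiv.Perm (Fin n) :=
  Equiv.swap ⟨(i : ℕ), lt_of_lt_of_le i.isLt (Nat.sub_le n 1)⟩
    ⟨(i : ℕ) + 1, by have := i.isLt; omega⟩

/-- The product in `S_n` of the adjacent transpositions along a word. -/
def wordProd (n : ℕ) (l : List (Fin (n - 1))) : Equiv.Perm (Fin n) :=
  (l.map (s n)).prod

/-- The product `T_{i_1} ⋯ T_{i_r}` in `B_n` along a word `(i_1, …, i_r)`. -/
def Tword (c d : F) (n : ℕ) (l : List (Fin (n - 1))) : B F c d n :=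
  (l.map (T F c d n)).prod

/-- `l` is a reduced word for the permutation `w ∈ S_n`: the corresponding product of
adjacent transpositions is `w`, and `l` has minimal length among all such words (its length
is then the Coxeter length `ℓ(w)`). -/
def IsReducedWord (n : ℕ) (w : Equiv.Perm (Fin n)) (l : List (Fin (n - 1))) : Prop :=
  wordProd n l = w ∧
    ∀ l' : List (Fin (n - 1)), wordProd n l' = w → l.length ≤ l'.length

/-- The Coxeter length `ℓ(w)` of `w ∈ S_n` with respect to the adjacent transpositions. -/
noncomputable def len (n : ℕ) (w : Equiv.Perm (Fin n)) : ℕ :=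
  sInf {r | ∃ l : List (Fin (n - 1)), wordProd n l = w ∧ l.length = r}

end HeckeLikeTower

open HeckeLikeTower

/-!
By Matsumoto's theorem `T_x` is well defined for every permutation `x`, and the left regular
representation, whose generators commute with those of the right one, shows that the `T_x` form a
basis of `B_N`. Multiplying `T_x` by a generator `T_i` gives a combination of `T_x` and
`T_{s_i x}` or `T_{x s_i}`. So the span of the `T_x` with `x` in a fixed double coset of
`S_k × S_ℓ` and `S_n × S_m` is a bimodule over the images of `ρ_{k,ℓ}` and `ρ_{n,m}`, and as such
it is generated by the `T_x` for which `x` has no right descent away from `n` and no left descent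
away from `k`. The double coset of `x` is determined by the number `r` of points of `{1, …, n}`
that `x` sends to `{1, …, k}`, and `w_r` is the only such descent-free permutation in it. Hence
`B'_r` has the basis of the `T_x` with overlap `r`: the basis of `B_N` is partitioned, and the
dimension is found by choosing the image of `{1, …, n}` and then the two bijections.
-/

namespace HeckeLikeTower

section AdjoinStable

variable {R A : Type*} [CommSemiring R] [Semiring A] [Algebra R A] {S : Set A}
  {D : Submodule R A}

lemma mul_mem_of_mem_adjoin_left (hS : ∀ a ∈ S, ∀ z ∈ D, a * z ∈ D) {a z : A}
    (ha : a ∈ Algebra.adjoin R S) (hz : z ∈ D) : a * z ∈ D := by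
  induction ha using Algebra.adjoin_induction generalizing z with
  | mem a ha => exact hS a ha z hz
  | algebraMap r => exact Algebra.smul_def r z ▸ D.smul_mem r hz
  | add a b _ _ iha ihb => exact add_mul a b z ▸ add_mem (iha hz) (ihb hz)
  | mul a b _ _ iha ihb => exact mul_assoc a b z ▸ iha (ihb hz)

lemma mul_mem_of_mem_adjoin_right (hS : ∀ a ∈ S, ∀ z ∈ D, z * a ∈ D) {a z : A}
    (ha : a ∈ Algebra.adjoin R S) (hz : z ∈ D) : z * a ∈ D := by
  induction ha using Algebra.adjoin_induction generalizing z with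
  | mem a ha => exact hS a ha z hz
  | algebraMap r =>
    rw [← Algebra.commutes, ← Algebra.smul_def]
    exact D.smul_mem r hz
  | add a b _ _ iha ihb => exact mul_add z a b ▸ add_mem (iha hz) (ihb hz)
  | mul a b _ _ iha ihb => exact mul_assoc z a b ▸ ihb (iha hz)

end AdjoinStable

section AlgHomRange

variable {R A A' C : Type*} [CommSemiring R] [Semiring A] [Semiring A'] [Semiring C] [Algebra R A]
  [Algebra R A'] [Algebra R C]

lemma range_eq_range_comp_includeLeft_sup (f : A ⊗[R] A' →ₐ[R] C) :
    f.range = (f.comp Algebra.TensorProduct.includeLeft).range ⊔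
      (f.comp Algebra.TensorProduct.includeRight).range := by
  have htop := Algebra.TensorProduct.map_range (AlgHom.id R A) (AlgHom.id R A')
  rw [Algebra.TensorProduct.map_id, AlgHom.comp_id, AlgHom.comp_id,
    (AlgHom.range_eq_top _).2 Function.surjective_id] at htop
  rw [AlgHom.range_comp, AlgHom.range_comp, ← Algebra.map_sup, ← htop, Algebra.map_top]

lemma span_map_mul_mul_map (f : A →ₐ[R] C) (g : A' →ₐ[R] C) (t : C) :
    Submodule.span R {z | ∃ a b, z = f a * t * g b} =
      f.range.toSubmodule * Submodule.span R {t} * g.range.toSubmodule := by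
  rw [← Submodule.span_eq f.range.toSubmodule, ← Submodule.span_eq g.range.toSubmodule,
    Submodule.span_mul_span, Submodule.span_mul_span]
  congr 1
  ext z
  simp [Set.mem_mul, eq_comm]

end AlgHomRange

lemma isInternal_span_image_fiber {R M ι κ : Type*} [Ring R] [AddCommGroup M] [Module R M]
    [DecidableEq κ] {b : ι → M} (hb : LinearIndependent R b)
    (hspan : Submodule.span R (Set.range b) = ⊤) (f : ι → κ) :
    DirectSum.IsInternal fun r => Submodule.span R (b '' (f ⁻¹' {r})) := by
  apply DirectSum.isInternal_submodule_of_iSupIndep_of_iSup_eq_top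
  · intro r
    have hle : ⨆ j, ⨆ _ : j ≠ r, Submodule.span R (b '' (f ⁻¹' {j})) ≤
        Submodule.span R (b '' (f ⁻¹' {r})ᶜ) :=
      iSup₂_le fun j hj => Submodule.span_mono <| Set.image_mono fun x hx hxr =>
        hj (hx.symm.trans hxr)
    exact (hb.disjoint_span_image disjoint_compl_right).mono_right hle
  · rw [← Submodule.span_iUnion, ← Set.image_iUnion, ← Set.preimage_iUnion,
      Set.iUnion_of_singleton, Set.preimage_univ, Set.image_univ, hspan]

section FinsetCounting

lemma eq_of_isLowerSet_of_card_eq {α : Type*} [LinearOrder α] {s t : Finset α}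
    (hs : IsLowerSet (s : Set α)) (ht : IsLowerSet (t : Set α)) (h : s.card = t.card) : s = t := by
  rcases hs.total ht with hst | hts
  · exact Finset.eq_of_subset_of_card_le (Finset.coe_subset.1 hst) h.ge
  · exact (Finset.eq_of_subset_of_card_le (Finset.coe_subset.1 hts) h.le).symm

lemma exists_perm_map_eq {α : Type*} [Finite α] {S A : Finset α} (h : S.card = A.card) :
    ∃ σ : Equiv.Perm α, S.map σ.toEmbedding = A := by
  classical
  let e : {a // a ∈ S} ≃ {a // a ∈ A} := Finset.equivOfCardEq h
  refine ⟨e.extendSubtype, Finset.eq_of_subset_of_card_le ?_ (by rw [Finset.card_map, h])⟩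
  intro a ha
  obtain ⟨b, hb, rfl⟩ := Finset.mem_map.1 ha
  exact e.extendSubtype_mem b hb

variable {α : Type*} [Fintype α] [DecidableEq α]

lemma card_perm_map_eq_self (S : Finset α) :
    Finset.card {x : Equiv.Perm α | S.map x.toEmbedding = S} =
      S.card.factorial * Sᶜ.card.factorial := by
  have hstab (x : Equiv.Perm α) : S.map x.toEmbedding = S ↔
      (fun a => decide (a ∈ S)) ∘ x.symm = fun a => decide (a ∈ S) := by
    simp only [Finset.ext_iff, Finset.mem_map_equiv, funext_iff, Function.comp_apply,
      decide_eq_decide]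
  have hcompl : Sᶜ = ({a | a ∉ S} : Finset α) := by
    ext a
    simp
  have hcard := DomMulAct.stabilizer_card (fun a => decide (a ∈ S))
  simp only [Fintype.card_subtype, Fintype.prod_bool, decide_eq_true_eq, decide_eq_false_iff_not,
    Finset.filter_univ_mem, ← hcompl] at hcard
  rw [← hcard]
  exact Finset.card_equiv (Equiv.inv _) fun x => by simp [hstab]

lemma card_perm_map_eq {S A : Finset α} (h : S.card = A.card) :
    Finset.card {x : Equiv.Perm α | S.map x.toEmbedding = A} =
      S.card.factorial * Sᶜ.card.factorial := by
  obtain ⟨σ, rfl⟩ := exists_perm_map_eq h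
  rw [← card_perm_map_eq_self]
  refine (Finset.card_equiv (Equiv.mulLeft σ) fun x => ?_).symm
  have hmul : S.map (σ * x).toEmbedding = (S.map x.toEmbedding).map σ.toEmbedding := by
    rw [Finset.map_map]
    rfl
  simp [hmul]

lemma card_card_inter_eq (K : Finset α) {n r : ℕ} (hr : r ≤ n) :
    Finset.card {A : Finset α | A.card = n ∧ (A ∩ K).card = r} =
      K.card.choose r * Kᶜ.card.choose (n - r) := by
  rw [← Finset.card_powersetCard, ← Finset.card_powersetCard, ← Finset.card_product]
  refine Finset.card_bij' (fun A _ => (A ∩ K, A \ K)) (fun p _ => p.1 ∪ p.2) ?_ ?_ ?_ ?_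
  · intro A hA
    obtain ⟨hAn, hAr⟩ := (Finset.mem_filter.1 hA).2
    have hsub : A \ K ⊆ Kᶜ := by grind [Finset.mem_compl]
    have hcard := Finset.card_inter_add_card_sdiff A K
    exact Finset.mk_mem_product (Finset.mem_powersetCard.2 ⟨Finset.inter_subset_right, hAr⟩)
      (Finset.mem_powersetCard.2 ⟨hsub, by omega⟩)
  · rintro ⟨P, Q⟩ h
    simp only [Finset.mem_product, Finset.mem_powersetCard] at h
    obtain ⟨⟨hPK, hP⟩, hQK, hQ⟩ := h
    have hdisj : Disjoint P Q := Finset.disjoint_of_subset_left hPK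
      (Finset.disjoint_of_subset_right hQK disjoint_compl_right)
    have hPQK : (P ∪ Q) ∩ K = P := by grind [Finset.mem_compl]
    simp [hPQK, Finset.card_union_of_disjoint hdisj, hP, hQ, hr]
  · grind
  · rintro ⟨P, Q⟩ h
    simp only [Finset.mem_product, Finset.mem_powersetCard] at h
    exact Prod.ext (by grind [Finset.mem_compl]) (by grind [Finset.mem_compl])

lemma card_perm_card_map_inter_eq (S K : Finset α) {r : ℕ} (hr : r ≤ S.card) :
    Finset.card {x : Equiv.Perm α | (S.map x.toEmbedding ∩ K).card = r} =
      S.card.factorial * Sᶜ.card.factorial * (K.card.choose r * Kᶜ.card.choose (S.card - r)) := by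
  rw [← card_card_inter_eq K hr, mul_comm, ← smul_eq_mul, ← Finset.sum_const,
    Finset.card_eq_sum_card_fiberwise (f := fun x => S.map x.toEmbedding)
      (t := {A : Finset α | A.card = S.card ∧ (A ∩ K).card = r})]
  · refine Finset.sum_congr rfl fun A hA => ?_
    obtain ⟨hAS, hAK⟩ := (Finset.mem_filter.1 hA).2
    rw [← card_perm_map_eq hAS.symm, Finset.filter_filter]
    exact congrArg _ <| Finset.filter_congr fun x _ =>
      ⟨And.right, fun hx => ⟨hx ▸ hAK, hx⟩⟩
  · intro x hx
    simpa using hx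

end FinsetCounting

section Permutations

variable {n : ℕ}

/-- The smaller of the two points exchanged by the adjacent transposition `s n i`. -/
def lo (i : Fin (n - 1)) : Fin n := ⟨i, by omega⟩

/-- The larger of the two points exchanged by the adjacent transposition `s n i`. -/
def hi (i : Fin (n - 1)) : Fin n := ⟨i + 1, by omega⟩

@[simp, grind =]
lemma val_lo (i : Fin (n - 1)) : (lo i : ℕ) = i := rfl

@[simp, grind =]
lemma val_hi (i : Fin (n - 1)) : (hi i : ℕ) = i + 1 := rfl

lemma lo_lt_hi (i : Fin (n - 1)) : lo i < hi i := Nat.lt_succ_self i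

lemma hi_eq_lo {i j : Fin (n - 1)} (h : (j : ℕ) = i + 1) : hi i = lo j := Fin.ext h.symm

lemma s_apply_lo (i : Fin (n - 1)) : s n i (lo i) = hi i := Equiv.swap_apply_left _ _

lemma s_apply_hi (i : Fin (n - 1)) : s n i (hi i) = lo i := Equiv.swap_apply_right _ _

lemma s_apply_of_ne {i : Fin (n - 1)} {a : Fin n} (hlo : (a : ℕ) ≠ i) (hhi : (a : ℕ) ≠ i + 1) :
    s n i a = a :=
  Equiv.swap_apply_of_ne_of_ne (Fin.ne_of_val_ne hlo) (Fin.ne_of_val_ne hhi)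

lemma s_inv (i : Fin (n - 1)) : (s n i)⁻¹ = s n i := Equiv.swap_inv _ _

lemma s_mul_cancel_left (i : Fin (n - 1)) (x : Equiv.Perm (Fin n)) :
    s n i * (s n i * x) = x :=
  Equiv.swap_mul_self_mul _ _ x

lemma s_mul_cancel_right (x : Equiv.Perm (Fin n)) (i : Fin (n - 1)) :
    x * s n i * s n i = x :=
  Equiv.mul_swap_mul_self _ _ x

lemma val_s_apply (i : Fin (n - 1)) (a : Fin n) :
    (s n i a : ℕ) =
      if (a : ℕ) = i then (i : ℕ) + 1 else if (a : ℕ) = i + 1 then (i : ℕ) else a := by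
  simp only [s, Equiv.swap_apply_def, Fin.ext_iff]
  split_ifs <;> rfl

lemma s_lt_s_iff {i : Fin (n - 1)} {a b : Fin n} (h : ¬(a = lo i ∧ b = hi i))
    (h' : ¬(a = hi i ∧ b = lo i)) : s n i a < s n i b ↔ a < b := by
  simp only [Fin.ext_iff, lo, hi] at h h'
  simp only [Fin.lt_def, val_s_apply]
  grind

lemma s_mul_s_comm {i j : Fin (n - 1)} (h : (i : ℕ) + 1 < j) :
    s n i * s n j = s n j * s n i := by
  ext a
  simp only [Equiv.Perm.mul_apply, val_s_apply]
  grind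

lemma s_mul_s_mul_s {i j : Fin (n - 1)} (h : (j : ℕ) = i + 1) :
    s n i * s n j * s n i = s n j * s n i * s n j := by
  ext a
  simp only [Equiv.Perm.mul_apply, val_s_apply]
  grind

lemma strictMonoOn_of_lo_lt_hi {α : Type*} [Preorder α] {f : Fin n → α} {S : Set (Fin n)}
    (hS : S.OrdConnected) (hf : ∀ i, lo i ∈ S → hi i ∈ S → f (lo i) < f (hi i)) :
    StrictMonoOn f S := by
  refine strictMonoOn_of_lt_succ hS fun a ha haS hsucc => ?_
  obtain ⟨b, hab⟩ := not_isMax_iff.1 ha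
  let i : Fin (n - 1) := ⟨a, by omega⟩
  have hlo : a = lo i := rfl
  have hhi : Order.succ a = hi i := Order.succ_eq_of_covBy ⟨lo_lt_hi i, fun p hp hp' => by
    simp only [Fin.lt_def, hi, hlo, lo] at hp hp'
    omega⟩
  rw [hhi] at hsucc ⊢
  exact hf i haS hsucc

lemma lt_or_gt_of_perm (x : Equiv.Perm (Fin n)) (i : Fin (n - 1)) :
    x (lo i) < x (hi i) ∨ x (hi i) < x (lo i) :=
  lt_or_gt_of_ne (x.injective.ne (lo_lt_hi i).ne)

lemma eq_one_of_strictMono {x : Equiv.Perm (Fin n)} (hx : StrictMono x) : x = 1 :=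
  Equiv.ext <| DFunLike.congr_fun (F := Fin n ≃o Fin n) <|
    Subsingleton.elim (hx.orderIsoOfSurjective x x.surjective) (OrderIso.refl _)

lemma exists_hi_lt_lo {x : Equiv.Perm (Fin n)} (hx : x ≠ 1) : ∃ i, x (hi i) < x (lo i) := by
  contrapose! hx
  exact eq_one_of_strictMono <| strictMonoOn_univ.1 <|
    strictMonoOn_of_lo_lt_hi Set.ordConnected_univ fun i _ _ =>
      (hx i).lt_of_ne (x.injective.ne (lo_lt_hi i).ne)

end Permutations

section Inversions

variable {n : ℕ}

/-- The inversions of `x`, recorded by positions. -/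
def inversions (x : Equiv.Perm (Fin n)) : Finset (Fin n × Fin n) :=
  {p | p.1 < p.2 ∧ x p.2 < x p.1}

/-- The number of inversions of `x`; it is the Coxeter length, see `isReducedWord_iff`. -/
def invCount (x : Equiv.Perm (Fin n)) : ℕ := (inversions x).card

lemma mem_inversions {x : Equiv.Perm (Fin n)} {a b : Fin n} :
    (a, b) ∈ inversions x ↔ a < b ∧ x b < x a := by
  simp [inversions]

lemma invCount_one : invCount (1 : Equiv.Perm (Fin n)) = 0 :=
  Finset.card_eq_zero.2 <| Finset.eq_empty_of_forall_notMem fun _ h =>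
    lt_asymm (mem_inversions.1 h).1 (mem_inversions.1 h).2

lemma invCount_inv (x : Equiv.Perm (Fin n)) : invCount x⁻¹ = invCount x :=
  Finset.card_equiv ((x⁻¹.prodCongr x⁻¹).trans (Equiv.prodComm _ _)) fun ⟨a, b⟩ => by
    simp [mem_inversions, and_comm]

lemma invCount_mul_s_of_lt {x : Equiv.Perm (Fin n)} {i : Fin (n - 1)} (h : x (lo i) < x (hi i)) :
    invCount (x * s n i) = invCount x + 1 := by
  have hmem : (lo i, hi i) ∈ inversions (x * s n i) := by
    simpa [mem_inversions, s_apply_lo, s_apply_hi, lo_lt_hi] using h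
  rw [invCount, ← Finset.card_erase_add_one hmem, invCount, Nat.add_right_cancel_iff]
  refine Finset.card_equiv ((s n i).prodCongr (s n i)) fun ⟨a, b⟩ => ?_
  simp only [Finset.mem_erase, ne_eq, Prod.mk.injEq, Equiv.prodCongr_apply, Prod.map_apply,
    mem_inversions, Equiv.Perm.mul_apply]
  by_cases hab : a = lo i ∧ b = hi i
  · simp [hab, s_apply_lo, s_apply_hi, (lo_lt_hi i).not_gt]
  by_cases hba : a = hi i ∧ b = lo i
  · simp [hba, s_apply_lo, s_apply_hi, h.not_gt, (lo_lt_hi i).not_gt]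
  · simp [hab, s_lt_s_iff hab hba]

lemma invCount_s_mul_of_lt {x : Equiv.Perm (Fin n)} {i : Fin (n - 1)}
    (h : x⁻¹ (lo i) < x⁻¹ (hi i)) : invCount (s n i * x) = invCount x + 1 := by
  rw [← invCount_inv, mul_inv_rev, s_inv, invCount_mul_s_of_lt h, invCount_inv]

lemma invCount_mul_s_of_gt {x : Equiv.Perm (Fin n)} {i : Fin (n - 1)} (h : x (hi i) < x (lo i)) :
    invCount x = invCount (x * s n i) + 1 := by
  rw [← invCount_mul_s_of_lt, s_mul_cancel_right]
  simpa [s_apply_lo, s_apply_hi] using h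

lemma invCount_s_mul_of_gt {x : Equiv.Perm (Fin n)} {i : Fin (n - 1)}
    (h : x⁻¹ (hi i) < x⁻¹ (lo i)) : invCount x = invCount (s n i * x) + 1 := by
  rw [← invCount_inv, invCount_mul_s_of_gt h, ← invCount_inv (s n i * x), mul_inv_rev, s_inv]

lemma invCount_lt_mul_s_iff {x : Equiv.Perm (Fin n)} {i : Fin (n - 1)} :
    invCount x < invCount (x * s n i) ↔ x (lo i) < x (hi i) := by
  rcases lt_or_gt_of_perm x i with h | h
  · simp [invCount_mul_s_of_lt h, h]
  · simp [invCount_mul_s_of_gt h, h.not_gt]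

lemma invCount_lt_s_mul_iff {x : Equiv.Perm (Fin n)} {i : Fin (n - 1)} :
    invCount x < invCount (s n i * x) ↔ x⁻¹ (lo i) < x⁻¹ (hi i) := by
  rw [← invCount_lt_mul_s_iff, ← invCount_inv (s n i * x), mul_inv_rev, s_inv, invCount_inv x]

lemma invCount_s_mul_s_mul_of_lt {x : Equiv.Perm (Fin n)} {i j : Fin (n - 1)}
    (hij : (i : ℕ) + 1 < j) (hxi : x⁻¹ (lo i) < x⁻¹ (hi i)) (hxj : x⁻¹ (lo j) < x⁻¹ (hi j)) :
    invCount (s n i * (s n j * x)) = invCount x + 2 := by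
  have hlo : s n j (lo i) = lo i := s_apply_of_ne (by grind) (by grind)
  have hhi : s n j (hi i) = hi i := s_apply_of_ne (by grind) (by grind)
  rw [invCount_s_mul_of_lt (by simpa [s_inv, hlo, hhi] using hxi), invCount_s_mul_of_lt hxj]

lemma invCount_s_mul_s_mul_s_mul_of_lt {x : Equiv.Perm (Fin n)} {i j : Fin (n - 1)}
    (hij : (j : ℕ) = i + 1) (hxi : x⁻¹ (lo i) < x⁻¹ (hi i)) (hxj : x⁻¹ (lo j) < x⁻¹ (hi j)) :
    invCount (s n i * (s n j * (s n i * x))) = invCount x + 3 := by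
  have hlo : s n j (lo i) = lo i := s_apply_of_ne (by grind) (by grind)
  have hhi : s n i (hi j) = hi j := s_apply_of_ne (by grind) (by grind)
  have hmid := hi_eq_lo hij
  have hlo_i : s n i (lo j) = lo i := hmid ▸ s_apply_hi i
  have hjhi : x⁻¹ (s n i (lo j)) < x⁻¹ (s n i (hi j)) := by
    rw [hlo_i, hhi]
    exact hxi.trans (hmid ▸ hxj)
  have hihi : x⁻¹ (s n i (s n j (lo i))) < x⁻¹ (s n i (s n j (hi i))) := by
    rw [hlo, s_apply_lo, hmid, s_apply_lo, hhi]
    exact hxj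
  rw [invCount_s_mul_of_lt (by simpa [s_inv] using hihi),
    invCount_s_mul_of_lt (by simpa [s_inv] using hjhi), invCount_s_mul_of_lt hxi]

/-- `s n i` reverses the order of `a` and `b` only when it exchanges them. Hence right
multiplication by `s n j` can only change whether `i` is a left ascent of `x` if
`s n i * x = x * s n j`. -/
lemma invCount_lt_s_mul_mul_s_iff {x : Equiv.Perm (Fin n)} {i j : Fin (n - 1)}
    (h : s n i * x ≠ x * s n j) :
    invCount (x * s n j) < invCount (s n i * (x * s n j)) ↔ invCount x < invCount (s n i * x) := by
  have hne {a b : Fin n} (hab : s n i = Equiv.swap (x a) (x b)) : s n j ≠ Equiv.swap a b := by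
    rintro hs
    rw [hs, Equiv.mul_swap_eq_swap_mul, ← hab] at h
    exact h rfl
  rw [invCount_lt_s_mul_iff, invCount_lt_s_mul_iff, mul_inv_rev, s_inv, Equiv.Perm.mul_apply,
    Equiv.Perm.mul_apply]
  have hs : s n i = Equiv.swap (x (x⁻¹ (lo i))) (x (x⁻¹ (hi i))) := by
    simp [s, lo, hi]
  refine s_lt_s_iff (fun ⟨ha, hb⟩ => hne hs ?_) (fun ⟨ha, hb⟩ => hne hs ?_)
  · rw [ha, hb]; rfl
  · rw [ha, hb, Equiv.swap_comm]; rfl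

lemma invCount_lt_mul_s_iff_s_mul {x : Equiv.Perm (Fin n)} {i j : Fin (n - 1)}
    (h : s n i * x ≠ x * s n j) :
    invCount (s n i * x) < invCount (s n i * x * s n j) ↔ invCount x < invCount (x * s n j) := by
  have h' : s n j * x⁻¹ ≠ x⁻¹ * s n i := fun h' =>
    h <| inv_injective <| by simpa [s_inv] using h'.symm
  rw [← invCount_inv (s n i * x), ← invCount_inv (s n i * x * s n j), ← invCount_inv x,
    ← invCount_inv (x * s n j)]
  simpa only [mul_inv_rev, s_inv] using invCount_lt_s_mul_mul_s_iff h'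

@[elab_as_elim]
lemma perm_induction {motive : Equiv.Perm (Fin n) → Prop} (one : motive 1)
    (mul_s : ∀ x i, invCount x < invCount (x * s n i) → motive x → motive (x * s n i))
    (x : Equiv.Perm (Fin n)) : motive x := by
  induction hk : invCount x using Nat.strong_induction_on generalizing x with
  | _ k ih =>
    by_cases hx : x = 1
    · exact hx ▸ one
    · obtain ⟨i, hxi⟩ := exists_hi_lt_lo hx
      have hlen := invCount_mul_s_of_gt hxi
      rw [← s_mul_cancel_right x i]
      exact mul_s _ i (by rw [s_mul_cancel_right]; omega) (ih _ (by omega) _ rfl)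

end Inversions

section ReducedWords

variable {n : ℕ}

lemma wordProd_cons (i : Fin (n - 1)) (l : List (Fin (n - 1))) :
    wordProd n (i :: l) = s n i * wordProd n l := by
  simp [wordProd]

lemma invCount_s_mul_le (i : Fin (n - 1)) (x : Equiv.Perm (Fin n)) :
    invCount (s n i * x) ≤ invCount x + 1 := by
  rcases lt_or_gt_of_perm x⁻¹ i with h | h
  · exact (invCount_s_mul_of_lt h).le
  · have := invCount_s_mul_of_gt h
    omega

lemma invCount_wordProd_le (l : List (Fin (n - 1))) : invCount (wordProd n l) ≤ l.length := by
  induction l with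
  | nil => exact invCount_one.le
  | cons i l ih =>
    rw [wordProd_cons, List.length_cons]
    exact (invCount_s_mul_le i _).trans (Nat.succ_le_succ ih)

lemma exists_wordProd_eq (x : Equiv.Perm (Fin n)) :
    ∃ l, wordProd n l = x ∧ l.length = invCount x := by
  induction x using perm_induction with
  | one => exact ⟨[], rfl, invCount_one.symm⟩
  | mul_s x i h ih =>
    obtain ⟨l, rfl, hl⟩ := ih
    refine ⟨l ++ [i], by simp [wordProd], ?_⟩
    rw [List.length_append, hl, invCount_mul_s_of_lt (invCount_lt_mul_s_iff.1 h)]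
    rfl

lemma isReducedWord_iff {x : Equiv.Perm (Fin n)} {l : List (Fin (n - 1))} :
    IsReducedWord n x l ↔ wordProd n l = x ∧ l.length = invCount x := by
  refine and_congr_right fun hx => ⟨fun hmin => ?_, fun hl l' hl' => ?_⟩
  · obtain ⟨l', hl', hlen⟩ := exists_wordProd_eq x
    exact ((hmin l' hl').trans_eq hlen).antisymm (hx ▸ invCount_wordProd_le l)
  · rw [hl, ← hl']
    exact invCount_wordProd_le l'

lemma exists_isReducedWord (x : Equiv.Perm (Fin n)) : ∃ l, IsReducedWord n x l :=
  (exists_wordProd_eq x).imp fun _ => isReducedWord_iff.2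

lemma IsReducedWord.of_cons {x : Equiv.Perm (Fin n)} {i : Fin (n - 1)} {l : List (Fin (n - 1))}
    (h : IsReducedWord n x (i :: l)) :
    IsReducedWord n (s n i * x) l ∧ x⁻¹ (hi i) < x⁻¹ (lo i) := by
  obtain ⟨rfl, hlen⟩ := isReducedWord_iff.1 h
  have hle := invCount_wordProd_le l
  rw [wordProd_cons, List.length_cons] at hlen
  rw [wordProd_cons, s_mul_cancel_left, isReducedWord_iff]
  rcases lt_or_gt_of_perm (s n i * wordProd n l)⁻¹ i with hlt | hgt
  · have hs := invCount_s_mul_of_lt hlt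
    rw [s_mul_cancel_left] at hs
    omega
  · have hs := invCount_s_mul_of_gt hgt
    rw [s_mul_cancel_left] at hs
    exact ⟨⟨rfl, by omega⟩, hgt⟩

lemma isReducedWord_cons_cons_of_lt {x : Equiv.Perm (Fin n)} {i j : Fin (n - 1)}
    {e : List (Fin (n - 1))} (he : IsReducedWord n x e) (hij : (i : ℕ) + 1 < j)
    (hxi : x⁻¹ (lo i) < x⁻¹ (hi i)) (hxj : x⁻¹ (lo j) < x⁻¹ (hi j)) :
    IsReducedWord n (s n i * (s n j * x)) (i :: j :: e) ∧
      IsReducedWord n (s n i * (s n j * x)) (j :: i :: e) := by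
  obtain ⟨rfl, hlen⟩ := isReducedWord_iff.1 he
  simp only [isReducedWord_iff, wordProd_cons, List.length_cons,
    invCount_s_mul_s_mul_of_lt hij hxi hxj, hlen, and_true, true_and]
  rw [← mul_assoc, ← s_mul_s_comm hij, mul_assoc]

lemma isReducedWord_cons_cons_cons_of_lt {x : Equiv.Perm (Fin n)} {i j : Fin (n - 1)}
    {e : List (Fin (n - 1))} (he : IsReducedWord n x e) (hij : (j : ℕ) = i + 1)
    (hxi : x⁻¹ (lo i) < x⁻¹ (hi i)) (hxj : x⁻¹ (lo j) < x⁻¹ (hi j)) :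
    IsReducedWord n (s n i * (s n j * (s n i * x))) (i :: j :: i :: e) ∧
      IsReducedWord n (s n i * (s n j * (s n i * x))) (j :: i :: j :: e) := by
  obtain ⟨rfl, hlen⟩ := isReducedWord_iff.1 he
  simp only [isReducedWord_iff, wordProd_cons, List.length_cons,
    invCount_s_mul_s_mul_s_mul_of_lt hij hxi hxj, hlen, and_true, true_and]
  simp only [← mul_assoc, s_mul_s_mul_s hij]

lemma exists_isReducedWord_of_far {x : Equiv.Perm (Fin n)} {i j : Fin (n - 1)}
    (hij : (i : ℕ) + 1 < j) (hxi : x⁻¹ (hi i) < x⁻¹ (lo i)) (hxj : x⁻¹ (hi j) < x⁻¹ (lo j)) :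
    ∃ e, IsReducedWord n x (i :: j :: e) ∧ IsReducedWord n x (j :: i :: e) := by
  have hjlo : s n i (lo j) = lo j := s_apply_of_ne (by grind) (by grind)
  have hjhi : s n i (hi j) = hi j := s_apply_of_ne (by grind) (by grind)
  have hilo : s n j (lo i) = lo i := s_apply_of_ne (by grind) (by grind)
  have hihi : s n j (hi i) = hi i := s_apply_of_ne (by grind) (by grind)
  obtain ⟨e, he⟩ := exists_isReducedWord (s n j * (s n i * x))
  have hred := isReducedWord_cons_cons_of_lt he hij
    (by simpa [s_inv, hilo, hihi, s_apply_lo, s_apply_hi] using hxi)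
    (by simpa [s_inv, hjlo, hjhi, s_apply_lo, s_apply_hi] using hxj)
  simp only [s_mul_cancel_left] at hred
  exact ⟨e, hred⟩

lemma exists_isReducedWord_of_adjacent {x : Equiv.Perm (Fin n)} {i j : Fin (n - 1)}
    (hij : (j : ℕ) = i + 1) (hxi : x⁻¹ (hi i) < x⁻¹ (lo i)) (hxj : x⁻¹ (hi j) < x⁻¹ (lo j)) :
    ∃ e, IsReducedWord n x (i :: j :: i :: e) ∧ IsReducedWord n x (j :: i :: j :: e) := by
  have hlo : s n j (lo i) = lo i := s_apply_of_ne (by grind) (by grind)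
  have hhi : s n i (hi j) = hi j := s_apply_of_ne (by grind) (by grind)
  have hmid := hi_eq_lo hij
  have hlo_i : s n i (lo j) = lo i := hmid ▸ s_apply_hi i
  obtain ⟨e, he⟩ := exists_isReducedWord (s n i * (s n j * (s n i * x)))
  have hred := isReducedWord_cons_cons_cons_of_lt he hij
    (by simpa [s_inv, hlo, hhi, hmid, hlo_i, s_apply_lo, s_apply_hi] using hxj)
    (by simpa [s_inv, hlo, hhi, ← hmid, s_apply_lo, s_apply_hi] using hxi)
  simp only [s_mul_cancel_left] at hred
  exact ⟨e, hred⟩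

variable {M : Type*} [Monoid M] {f : Fin (n - 1) → M}

lemma exists_isReducedWord_prod_map_eq
    (hcomm : ∀ i j : Fin (n - 1), (i : ℕ) + 1 < j → f i * f j = f j * f i)
    (hbraid : ∀ i j : Fin (n - 1), (j : ℕ) = i + 1 → f i * f j * f i = f j * f i * f j)
    {x : Equiv.Perm (Fin n)} {i j : Fin (n - 1)} (hij : i < j)
    (hxi : x⁻¹ (hi i) < x⁻¹ (lo i)) (hxj : x⁻¹ (hi j) < x⁻¹ (lo j)) :
    ∃ u v, IsReducedWord n x (i :: u) ∧ IsReducedWord n x (j :: v) ∧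
      ((i :: u).map f).prod = ((j :: v).map f).prod := by
  rcases (Nat.succ_le_of_lt hij).eq_or_lt with hadj | hfar
  · obtain ⟨e, hie, hje⟩ := exists_isReducedWord_of_adjacent hadj.symm hxi hxj
    refine ⟨j :: i :: e, i :: j :: e, hie, hje, ?_⟩
    simp only [List.map_cons, List.prod_cons, ← mul_assoc, hbraid i j hadj.symm]
  · obtain ⟨e, hie, hje⟩ := exists_isReducedWord_of_far hfar hxi hxj
    refine ⟨j :: e, i :: e, hie, hje, ?_⟩
    simp only [List.map_cons, List.prod_cons, ← mul_assoc, hcomm i j hfar]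

/-- Matsumoto's theorem. Reduced words with different first letters `i`, `j` are both compared with
reduced words that start with the two sides of the braid relation between `i` and `j`. -/
theorem IsReducedWord.prod_map_eq
    (hcomm : ∀ i j : Fin (n - 1), (i : ℕ) + 1 < j → f i * f j = f j * f i)
    (hbraid : ∀ i j : Fin (n - 1), (j : ℕ) = i + 1 → f i * f j * f i = f j * f i * f j)
    {x : Equiv.Perm (Fin n)} {l l' : List (Fin (n - 1))} (hl : IsReducedWord n x l)
    (hl' : IsReducedWord n x l') : (l.map f).prod = (l'.map f).prod := by
  induction hk : l.length generalizing x l l' with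
  | zero =>
    have hlen : l'.length ≤ 0 := hk ▸ hl'.2 l hl.1
    rw [List.length_eq_zero_iff.1 hk, List.length_eq_zero_iff.1 (Nat.le_zero.1 hlen)]
  | succ k ih =>
    have same_head {i u v} (hu : IsReducedWord n x (i :: u)) (hv : IsReducedWord n x (i :: v)) :
        ((i :: u).map f).prod = ((i :: v).map f).prod := by
      have hlen : (i :: u).length = k + 1 := hk ▸ (hu.2 l hl.1).antisymm (hl.2 _ hu.1)
      rw [List.map_cons, List.prod_cons, ih hu.of_cons.1 hv.of_cons.1 (Nat.succ.inj hlen)]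
      simp
    have lt_head {i j u v} (hij : i < j) (hu : IsReducedWord n x (i :: u))
        (hv : IsReducedWord n x (j :: v)) : ((i :: u).map f).prod = ((j :: v).map f).prod := by
      obtain ⟨u', v', hu', hv', heq⟩ :=
        exists_isReducedWord_prod_map_eq hcomm hbraid hij hu.of_cons.2 hv.of_cons.2
      rw [same_head hu hu', heq, same_head hv' hv]
    have hlen' : l'.length = k + 1 := hk ▸ (hl'.2 l hl.1).antisymm (hl.2 l' hl'.1)
    obtain ⟨i, u, rfl⟩ := List.exists_cons_of_length_eq_add_one hk
    obtain ⟨j, v, rfl⟩ := List.exists_cons_of_length_eq_add_one hlen'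
    rcases lt_trichotomy i j with hij | rfl | hij
    · exact lt_head hij hl hl'
    · exact same_head hl hl'
    · exact (lt_head hij hl' hl).symm

end ReducedWords

section HeckeOp

variable {R α : Type*} [CommRing R]

/-- Given a height `ht` on `α` and a map `g : α → α`, the operator by which a generator of a Hecke
algebra acts in the regular representation: a basis vector `x` is sent to `g x` when `g` increases
its height and to `c x + d (g x)` otherwise. -/
noncomputable def heckeOp (c d : R) (ht : α → ℕ) (g : α → α) : Module.End R (α →₀ R) :=
  Finsupp.linearCombination R fun x =>
    if ht x < ht (g x) then Finsupp.single (g x) 1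
    else c • Finsupp.single x 1 + d • Finsupp.single (g x) 1

variable {c d : R} {ht : α → ℕ} {g h : α → α}

lemma heckeOp_single_of_lt {x : α} (hx : ht x < ht (g x)) :
    heckeOp c d ht g (Finsupp.single x 1) = Finsupp.single (g x) 1 := by
  simp [heckeOp, hx]

lemma heckeOp_single_of_not_lt {x : α} (hx : ¬ht x < ht (g x)) :
    heckeOp c d ht g (Finsupp.single x 1) =
      c • Finsupp.single x 1 + d • Finsupp.single (g x) 1 := by
  simp [heckeOp, hx]

lemma heckeOp_single_congr {x : α} (hx : g x = h x) :
    heckeOp c d ht g (Finsupp.single x 1) = heckeOp c d ht h (Finsupp.single x 1) := by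
  simp [heckeOp, hx]

lemma heckeOp_mul_self (hg : Function.Involutive g) (hne : ∀ x, ht (g x) ≠ ht x) :
    heckeOp c d ht g * heckeOp c d ht g = c • heckeOp c d ht g + d • 1 := by
  refine Finsupp.lhom_ext' fun x => LinearMap.ext_ring ?_
  rcases (hne x).lt_or_gt with hx | hx
  · have hgx : ht (g x) < ht (g (g x)) := by rwa [hg x]
    simp only [LinearMap.comp_apply, Finsupp.lsingle_apply, Module.End.mul_apply,
      LinearMap.add_apply, LinearMap.smul_apply, Module.End.one_apply, map_add, map_smul,
      heckeOp_single_of_not_lt hx.not_gt, heckeOp_single_of_lt hgx, hg x]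
  · have hgx : ¬ht (g x) < ht (g (g x)) := by rw [hg x]; exact hx.not_gt
    simp only [LinearMap.comp_apply, Finsupp.lsingle_apply, Module.End.mul_apply,
      LinearMap.add_apply, LinearMap.smul_apply, Module.End.one_apply,
      heckeOp_single_of_not_lt hgx, heckeOp_single_of_lt hx, hg x]

lemma commute_heckeOp (hgh : Function.Commute g h)
    (H : ∀ x, g x ≠ h x → ((ht (h x) < ht (g (h x)) ↔ ht x < ht (g x)) ∧
      (ht (g x) < ht (h (g x)) ↔ ht x < ht (h x)))) :
    Commute (heckeOp c d ht g) (heckeOp c d ht h) := by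
  refine Finsupp.lhom_ext' fun x => LinearMap.ext_ring ?_
  simp only [LinearMap.comp_apply, Finsupp.lsingle_apply, Module.End.mul_apply]
  by_cases hx : g x = h x
  · have hgx : g (g x) = h (g x) := (congrArg g hx).trans (hgh.eq x)
    by_cases hlt : ht x < ht (g x)
    · rw [← heckeOp_single_congr hx, heckeOp_single_of_lt hlt, heckeOp_single_congr hgx]
    · simp only [← heckeOp_single_congr hx, heckeOp_single_of_not_lt hlt, map_add, map_smul,
        heckeOp_single_congr hgx]
  · obtain ⟨Hg, Hh⟩ := H x hx
    rw [hgh.eq x] at Hg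
    by_cases hlg : ht x < ht (g x) <;> by_cases hlh : ht x < ht (h x)
    all_goals simp only [heckeOp, Finsupp.linearCombination_single, one_smul, map_add, map_smul,
      Hg, Hh, hlg, hlh, hgh.eq x, if_true, if_false]
    all_goals module

end HeckeOp

section RegularRepresentation

variable {R : Type*} [CommRing R] (c d : R) {n : ℕ}

/-- The action of the generator `T_{i+1}` on the left regular representation, whose basis is
indexed by the permutations. -/
noncomputable def leftOp (i : Fin (n - 1)) : Module.End R (Equiv.Perm (Fin n) →₀ R) :=
  heckeOp c d invCount (s n i * ·)

/-- The action of the generator `T_{j+1}` on the right regular representation. It is only used to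
show that the operators `leftOp` satisfy the braid relations. -/
noncomputable def rightOp (j : Fin (n - 1)) : Module.End R (Equiv.Perm (Fin n) →₀ R) :=
  heckeOp c d invCount (· * s n j)

lemma leftOp_mul_self (i : Fin (n - 1)) :
    leftOp c d i * leftOp c d i = c • leftOp c d i + d • 1 := by
  refine heckeOp_mul_self (s_mul_cancel_left i) fun x => ?_
  rcases lt_or_gt_of_perm x⁻¹ i with h | h
  · exact (invCount_s_mul_of_lt h).trans_ne (Nat.succ_ne_self _)
  · exact (invCount_s_mul_of_gt h).symm ▸ (Nat.succ_ne_self _).symm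

lemma commute_leftOp_rightOp (i j : Fin (n - 1)) : Commute (leftOp c d i) (rightOp c d j) :=
  commute_heckeOp (fun x => (mul_assoc _ x _).symm) fun _ hx =>
    ⟨invCount_lt_s_mul_mul_s_iff hx, invCount_lt_mul_s_iff_s_mul hx⟩

variable {c d}

lemma eq_of_commute_rightOp {φ ψ : Module.End R (Equiv.Perm (Fin n) →₀ R)}
    (hφ : ∀ j, Commute φ (rightOp c d j)) (hψ : ∀ j, Commute ψ (rightOp c d j))
    (h : φ (Finsupp.single 1 1) = ψ (Finsupp.single 1 1)) : φ = ψ := by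
  refine Finsupp.lhom_ext' fun x => LinearMap.ext_ring ?_
  simp only [LinearMap.comp_apply, Finsupp.lsingle_apply]
  induction x using perm_induction with
  | one => exact h
  | mul_s x j hlt ih =>
    have hx : rightOp c d j (Finsupp.single x 1) = Finsupp.single (x * s n j) 1 :=
      heckeOp_single_of_lt hlt
    rw [← hx, ← Module.End.mul_apply, ← Module.End.mul_apply, (hφ j).eq, (hψ j).eq,
      Module.End.mul_apply, Module.End.mul_apply, ih]

lemma IsReducedWord.prod_leftOp_single_one {x : Equiv.Perm (Fin n)} {l : List (Fin (n - 1))}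
    (hl : IsReducedWord n x l) :
    (l.map (leftOp c d)).prod (Finsupp.single 1 1) = Finsupp.single x 1 := by
  induction l generalizing x with
  | nil => rw [← hl.1]; rfl
  | cons i l ih =>
    have hlt : invCount (s n i * x) < invCount (s n i * (s n i * x)) := by
      rw [s_mul_cancel_left, invCount_s_mul_of_gt hl.of_cons.2]
      exact Nat.lt_succ_self _
    rw [List.map_cons, List.prod_cons, Module.End.mul_apply, ih hl.of_cons.1]
    exact (heckeOp_single_of_lt hlt).trans (by simp only [s_mul_cancel_left])

lemma prod_leftOp_eq {x : Equiv.Perm (Fin n)} {l l' : List (Fin (n - 1))}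
    (hl : IsReducedWord n x l) (hl' : IsReducedWord n x l') :
    (l.map (leftOp c d)).prod = (l'.map (leftOp c d)).prod := by
  have commutes (l : List (Fin (n - 1))) (j) : Commute (l.map (leftOp c d)).prod (rightOp c d j) :=
    Commute.list_prod_left _ _ fun a ha => by
      obtain ⟨i, -, rfl⟩ := List.mem_map.1 ha
      exact commute_leftOp_rightOp c d i j
  refine eq_of_commute_rightOp (commutes l) (commutes l') ?_
  rw [hl.prod_leftOp_single_one, hl'.prod_leftOp_single_one]

lemma isReducedWord_nil : IsReducedWord n 1 [] :=
  isReducedWord_iff.2 ⟨rfl, invCount_one.symm⟩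

lemma leftOp_comm {i j : Fin (n - 1)} (hij : (i : ℕ) + 1 < j) :
    leftOp c d i * leftOp c d j = leftOp c d j * leftOp c d i := by
  have h := isReducedWord_cons_cons_of_lt isReducedWord_nil hij (lo_lt_hi i) (lo_lt_hi j)
  simpa using prod_leftOp_eq (c := c) (d := d) h.1 h.2

lemma leftOp_braid {i j : Fin (n - 1)} (hij : (j : ℕ) = i + 1) :
    leftOp c d i * leftOp c d j * leftOp c d i = leftOp c d j * leftOp c d i * leftOp c d j := by
  have h := isReducedWord_cons_cons_cons_of_lt isReducedWord_nil hij (lo_lt_hi i) (lo_lt_hi j)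
  simpa [mul_assoc] using prod_leftOp_eq (c := c) (d := d) h.1 h.2

end RegularRepresentation

section HeckeAlgebra

variable {F : Type*} [Field F] {c d : F} {n : ℕ}

lemma T_comm {i j : Fin (n - 1)} (h : (i : ℕ) + 1 < j) :
    T F c d n i * T F c d n j = T F c d n j * T F c d n i := by
  simpa [T] using RingQuot.mkAlgHom_rel F (Rel.comm (c := c) (d := d) i j h)

lemma T_braid {i j : Fin (n - 1)} (h : (j : ℕ) = i + 1) :
    T F c d n i * T F c d n j * T F c d n i = T F c d n j * T F c d n i * T F c d n j := by
  simpa [T] using RingQuot.mkAlgHom_rel F (Rel.braid (c := c) (d := d) i j h)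

lemma T_mul_self (i : Fin (n - 1)) :
    T F c d n i * T F c d n i = c • T F c d n i + d • 1 := by
  simpa [T, Algebra.algebraMap_eq_smul_one] using
    RingQuot.mkAlgHom_rel F (Rel.quad (c := c) (d := d) i)

variable (F c d n) in
lemma adjoin_range_T : Algebra.adjoin F (Set.range (T F c d n)) = ⊤ := by
  have hT : Set.range (T F c d n) =
      RingQuot.mkAlgHom F (Rel F c d n) '' Set.range (FreeAlgebra.ι F) := Set.range_comp _ _
  rw [hT, ← AlgHom.map_adjoin, FreeAlgebra.adjoin_range_ι, Algebra.map_top, AlgHom.range_eq_top]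
  exact RingQuot.mkAlgHom_surjective F _

lemma IsReducedWord.Tword_eq {x : Equiv.Perm (Fin n)} {l l' : List (Fin (n - 1))}
    (hl : IsReducedWord n x l) (hl' : IsReducedWord n x l') :
    Tword F c d n l = Tword F c d n l' :=
  hl.prod_map_eq (fun _ _ => T_comm) (fun _ _ => T_braid) hl'

variable (F c d) in
/-- The element `T_w` of the Hecke-like algebra attached to a permutation `w`, computed from an
arbitrary choice of a reduced word of `w`. -/
noncomputable def Tperm (x : Equiv.Perm (Fin n)) : B F c d n :=
  Tword F c d n (exists_isReducedWord x).choose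

lemma IsReducedWord.Tword_eq_Tperm {x : Equiv.Perm (Fin n)} {l : List (Fin (n - 1))}
    (hl : IsReducedWord n x l) : Tword F c d n l = Tperm F c d x :=
  hl.Tword_eq (exists_isReducedWord x).choose_spec

lemma Tperm_one : Tperm F c d (1 : Equiv.Perm (Fin n)) = 1 :=
  isReducedWord_nil.Tword_eq_Tperm.symm

lemma Tperm_s_mul {x : Equiv.Perm (Fin n)} {i : Fin (n - 1)}
    (h : invCount x < invCount (s n i * x)) :
    Tperm F c d (s n i * x) = T F c d n i * Tperm F c d x := by
  obtain ⟨l, hl⟩ := exists_isReducedWord x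
  obtain ⟨rfl, hlen⟩ := isReducedWord_iff.1 hl
  have hcons : IsReducedWord n (s n i * wordProd n l) (i :: l) := isReducedWord_iff.2
    ⟨wordProd_cons i l, by
      rw [List.length_cons, hlen, invCount_s_mul_of_lt (invCount_lt_s_mul_iff.1 h)]⟩
  rw [← hl.Tword_eq_Tperm, ← hcons.Tword_eq_Tperm]
  simp [Tword]

lemma Tperm_mul_s {x : Equiv.Perm (Fin n)} {i : Fin (n - 1)}
    (h : invCount x < invCount (x * s n i)) :
    Tperm F c d (x * s n i) = Tperm F c d x * T F c d n i := by
  obtain ⟨l, hl⟩ := exists_isReducedWord x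
  obtain ⟨rfl, hlen⟩ := isReducedWord_iff.1 hl
  have happend : IsReducedWord n (wordProd n l * s n i) (l ++ [i]) := isReducedWord_iff.2
    ⟨by simp [wordProd], by
      simp [hlen, invCount_mul_s_of_lt (invCount_lt_mul_s_iff.1 h)]⟩
  rw [← hl.Tword_eq_Tperm, ← happend.Tword_eq_Tperm]
  simp [Tword]

lemma T_mul_Tperm_mem_span {A : Set (Equiv.Perm (Fin n))} {i : Fin (n - 1)}
    {x : Equiv.Perm (Fin n)} (hx : x ∈ A) (hsx : s n i * x ∈ A) :
    T F c d n i * Tperm F c d x ∈ Submodule.span F (Tperm F c d '' A) := by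
  have hTx := Submodule.subset_span (R := F) (Set.mem_image_of_mem (Tperm F c d) hx)
  have hTsx := Submodule.subset_span (R := F) (Set.mem_image_of_mem (Tperm F c d) hsx)
  rcases lt_or_gt_of_perm x⁻¹ i with h | h
  · rwa [← Tperm_s_mul (invCount_lt_s_mul_iff.2 h)]
  · have hdesc : invCount (s n i * x) < invCount (s n i * (s n i * x)) := by
      rw [s_mul_cancel_left, invCount_s_mul_of_gt h]
      exact Nat.lt_succ_self _
    have hx_eq := Tperm_s_mul (F := F) (c := c) (d := d) hdesc
    rw [s_mul_cancel_left] at hx_eq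
    have hTperm : T F c d n i * Tperm F c d x =
        c • Tperm F c d x + d • Tperm F c d (s n i * x) := by
      rw [hx_eq, ← mul_assoc, T_mul_self, add_mul, smul_mul_assoc, smul_mul_assoc, one_mul]
    rw [hTperm]
    exact add_mem (Submodule.smul_mem _ c hTx) (Submodule.smul_mem _ d hTsx)

lemma Tperm_mul_T_mem_span {A : Set (Equiv.Perm (Fin n))} {i : Fin (n - 1)}
    {x : Equiv.Perm (Fin n)} (hx : x ∈ A) (hxs : x * s n i ∈ A) :
    Tperm F c d x * T F c d n i ∈ Submodule.span F (Tperm F c d '' A) := by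
  have hTx := Submodule.subset_span (R := F) (Set.mem_image_of_mem (Tperm F c d) hx)
  have hTxs := Submodule.subset_span (R := F) (Set.mem_image_of_mem (Tperm F c d) hxs)
  rcases lt_or_gt_of_perm x i with h | h
  · rwa [← Tperm_mul_s (invCount_lt_mul_s_iff.2 h)]
  · have hdesc : invCount (x * s n i) < invCount (x * s n i * s n i) := by
      rw [s_mul_cancel_right, invCount_mul_s_of_gt h]
      exact Nat.lt_succ_self _
    have hx_eq := Tperm_mul_s (F := F) (c := c) (d := d) hdesc
    rw [s_mul_cancel_right] at hx_eq
    have hTperm : Tperm F c d x * T F c d n i =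
        c • Tperm F c d x + d • Tperm F c d (x * s n i) := by
      rw [hx_eq, mul_assoc, T_mul_self, mul_add, mul_smul_comm, mul_smul_comm, mul_one]
    rw [hTperm]
    exact add_mem (Submodule.smul_mem _ c hTx) (Submodule.smul_mem _ d hTxs)

lemma mul_mem_span_image_Tperm {J : Set (Fin (n - 1))} {A : Set (Equiv.Perm (Fin n))}
    (hA : ∀ i ∈ J, ∀ x ∈ A, s n i * x ∈ A) {a z : B F c d n}
    (ha : a ∈ Algebra.adjoin F (T F c d n '' J)) (hz : z ∈ Submodule.span F (Tperm F c d '' A)) :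
    a * z ∈ Submodule.span F (Tperm F c d '' A) := by
  refine mul_mem_of_mem_adjoin_left ?_ ha hz
  rintro _ ⟨i, hi, rfl⟩ z hz
  suffices h : Submodule.span F (Tperm F c d '' A) ≤
      (Submodule.span F (Tperm F c d '' A)).comap (LinearMap.mulLeft F (T F c d n i)) from h hz
  rw [Submodule.span_le]
  rintro _ ⟨x, hx, rfl⟩
  exact T_mul_Tperm_mem_span hx (hA i hi x hx)

lemma span_image_Tperm_mul_mem {J : Set (Fin (n - 1))} {A : Set (Equiv.Perm (Fin n))}
    (hA : ∀ i ∈ J, ∀ x ∈ A, x * s n i ∈ A) {a z : B F c d n}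
    (ha : a ∈ Algebra.adjoin F (T F c d n '' J)) (hz : z ∈ Submodule.span F (Tperm F c d '' A)) :
    z * a ∈ Submodule.span F (Tperm F c d '' A) := by
  refine mul_mem_of_mem_adjoin_right ?_ ha hz
  rintro _ ⟨i, hi, rfl⟩ z hz
  suffices h : Submodule.span F (Tperm F c d '' A) ≤
      (Submodule.span F (Tperm F c d '' A)).comap (LinearMap.mulRight F (T F c d n i)) from h hz
  rw [Submodule.span_le]
  rintro _ ⟨x, hx, rfl⟩
  exact Tperm_mul_T_mem_span hx (hA i hi x hx)

variable (F c d n) in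
lemma span_range_Tperm :
    Submodule.span F (Set.range (Tperm F c d : Equiv.Perm (Fin n) → B F c d n)) = ⊤ := by
  refine Submodule.eq_top_iff'.2 fun z => ?_
  rw [← Set.image_univ, ← mul_one z, ← Tperm_one]
  refine mul_mem_span_image_Tperm (J := Set.univ) (fun _ _ _ _ => Set.mem_univ _) ?_
    (Submodule.subset_span (Set.mem_image_of_mem _ (Set.mem_univ 1)))
  rw [Set.image_univ, adjoin_range_T]
  exact Algebra.mem_top

variable (F c d n) in
/-- The left regular representation of the Hecke-like algebra, on the space with basis `S_n`. -/
noncomputable def regularRep : B F c d n →ₐ[F] Module.End F (Equiv.Perm (Fin n) →₀ F) :=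
  RingQuot.liftAlgHom F ⟨FreeAlgebra.lift F (leftOp c d), fun _ _ h => by
    cases h with
    | comm i j h => simpa using leftOp_comm h
    | braid i j h => simpa using leftOp_braid h
    | quad i => simpa [Algebra.algebraMap_eq_smul_one] using leftOp_mul_self c d i⟩

lemma regularRep_T (i : Fin (n - 1)) : regularRep F c d n (T F c d n i) = leftOp c d i := by
  simp [regularRep, T]

lemma regularRep_Tperm_single_one (x : Equiv.Perm (Fin n)) :
    regularRep F c d n (Tperm F c d x) (Finsupp.single 1 1) = Finsupp.single x 1 := by
  obtain ⟨l, hl⟩ := exists_isReducedWord x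
  have hT : regularRep F c d n ∘ T F c d n = leftOp c d := funext regularRep_T
  rw [← hl.Tword_eq_Tperm, ← hl.prod_leftOp_single_one, Tword, map_list_prod, List.map_map, hT]

variable (F c d n) in
lemma linearIndependent_Tperm :
    LinearIndependent F (Tperm F c d : Equiv.Perm (Fin n) → B F c d n) := by
  let evalOne : B F c d n →ₗ[F] Equiv.Perm (Fin n) →₀ F :=
    (LinearMap.applyₗ (Finsupp.single 1 1)).comp (regularRep F c d n).toLinearMap
  refine LinearIndependent.of_comp evalOne ?_
  have heval : evalOne ∘ Tperm F c d = fun x => Finsupp.single x 1 :=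
    funext regularRep_Tperm_single_one
  rw [heval]
  exact Finsupp.linearIndependent_single_one F _

end HeckeAlgebra

section DoubleCosets

variable {N n k : ℕ} {x w : Equiv.Perm (Fin N)}

/-- The number of points of the first `n` that `x` sends to the first `k`. It parametrizes the
double cosets of `S_k × S_ℓ` and `S_n × S_m` in `S_N`. -/
def overlap (n k : ℕ) (x : Equiv.Perm (Fin N)) : ℕ :=
  Finset.card {i : Fin N | (i : ℕ) < n ∧ (x i : ℕ) < k}

lemma overlap_inv : overlap k n x⁻¹ = overlap n k x :=
  Finset.card_equiv x⁻¹ fun i => by simp [and_comm]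

lemma overlap_s_mul {i : Fin (N - 1)} (hi : (i : ℕ) + 1 ≠ k) :
    overlap n k (s N i * x) = overlap n k x := by
  have hlt (a : Fin N) : (s N i a : ℕ) < k ↔ (a : ℕ) < k := by
    rw [val_s_apply]
    grind
  simp only [overlap, Equiv.Perm.mul_apply, hlt]

lemma overlap_mul_s {i : Fin (N - 1)} (hi : (i : ℕ) + 1 ≠ n) :
    overlap n k (x * s N i) = overlap n k x := by
  rw [← overlap_inv, mul_inv_rev, s_inv, overlap_s_mul hi, overlap_inv]

lemma card_val_lt_of_le (hn : n ≤ N) : Finset.card {i : Fin N | (i : ℕ) < n} = n := by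
  rw [Fin.card_filter_val_lt, min_eq_right hn]

lemma card_val_apply_lt_of_le (x : Equiv.Perm (Fin N)) (hk : k ≤ N) :
    Finset.card {i : Fin N | (x i : ℕ) < k} = k :=
  (Finset.card_equiv x fun i => by simp).trans (card_val_lt_of_le hk)

lemma overlap_le_left (hn : n ≤ N) : overlap n k x ≤ n :=
  (Finset.card_le_card (Finset.monotone_filter_right _ fun _ _ h => h.1)).trans_eq
    (card_val_lt_of_le hn)

lemma overlap_le_right (hk : k ≤ N) : overlap n k x ≤ k :=
  overlap_inv (x := x) ▸ overlap_le_left hk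

lemma card_or_add_overlap (x : Equiv.Perm (Fin N)) (hn : n ≤ N) (hk : k ≤ N) :
    Finset.card {i : Fin N | (i : ℕ) < n ∨ (x i : ℕ) < k} + overlap n k x = n + k := by
  rw [overlap, Finset.filter_or, Finset.filter_and, Finset.card_union_add_card_inter,
    card_val_lt_of_le hn, card_val_apply_lt_of_le x hk]

lemma le_overlap_add (x : Equiv.Perm (Fin N)) (hn : n ≤ N) (hk : k ≤ N) :
    n + k ≤ overlap n k x + N := by
  have h := card_or_add_overlap x hn hk
  have hle := Finset.card_le_univ ({i : Fin N | (i : ℕ) < n ∨ (x i : ℕ) < k} : Finset (Fin N))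
  rw [Fintype.card_fin] at hle
  omega

/-- `x` is the shortest element of its double coset: it has no right descent away from `n` and no
left descent away from `k`. -/
structure IsMinimal (n k : ℕ) (x : Equiv.Perm (Fin N)) : Prop where
  strictMonoOn_lt : StrictMonoOn x {i | (i : ℕ) < n}
  strictMonoOn_ge : StrictMonoOn x {i | n ≤ (i : ℕ)}
  inv_strictMonoOn_lt : StrictMonoOn (x⁻¹ : Equiv.Perm (Fin N)) {i | (i : ℕ) < k}
  inv_strictMonoOn_ge : StrictMonoOn (x⁻¹ : Equiv.Perm (Fin N)) {i | k ≤ (i : ℕ)}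

lemma strictMonoOn_lt_of_ascents (h : ∀ i : Fin (N - 1), (i : ℕ) + 1 ≠ n → x (lo i) < x (hi i)) :
    StrictMonoOn x {i | (i : ℕ) < n} :=
  strictMonoOn_of_lo_lt_hi ⟨fun _ _ _ hb _ hc => lt_of_le_of_lt (Fin.le_def.1 hc.2) hb⟩
    fun i _ hhi => h i (ne_of_lt hhi)

lemma strictMonoOn_ge_of_ascents (h : ∀ i : Fin (N - 1), (i : ℕ) + 1 ≠ n → x (lo i) < x (hi i)) :
    StrictMonoOn x {i | n ≤ (i : ℕ)} :=
  strictMonoOn_of_lo_lt_hi ⟨fun _ ha _ _ _ hc => le_trans ha (Fin.le_def.1 hc.1)⟩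
    fun i hlo _ => h i (Nat.lt_succ_of_le hlo).ne'

lemma isMinimal_of_ascents (hr : ∀ i : Fin (N - 1), (i : ℕ) + 1 ≠ n → x (lo i) < x (hi i))
    (hl : ∀ i : Fin (N - 1), (i : ℕ) + 1 ≠ k → x⁻¹ (lo i) < x⁻¹ (hi i)) : IsMinimal n k x where
  strictMonoOn_lt := strictMonoOn_lt_of_ascents hr
  strictMonoOn_ge := strictMonoOn_ge_of_ascents hr
  inv_strictMonoOn_lt := strictMonoOn_lt_of_ascents hl
  inv_strictMonoOn_ge := strictMonoOn_ge_of_ascents hl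

namespace IsMinimal

lemma isLowerSet_and (hx : IsMinimal n k x) :
    IsLowerSet {i : Fin N | (i : ℕ) < n ∧ (x i : ℕ) < k} := by
  rintro i j hji ⟨hin, hik⟩
  have hjn : (j : ℕ) < n := lt_of_le_of_lt (Fin.le_def.1 hji) hin
  exact ⟨hjn, lt_of_le_of_lt (Fin.le_def.1 (hx.strictMonoOn_lt.monotoneOn hjn hin hji)) hik⟩

lemma isLowerSet_or (hx : IsMinimal n k x) :
    IsLowerSet {i : Fin N | (i : ℕ) < n ∨ (x i : ℕ) < k} := by
  intro i j hji hi
  rcases lt_or_ge (j : ℕ) n with hjn | hjn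
  · exact Or.inl hjn
  have hin : n ≤ (i : ℕ) := hjn.trans (Fin.le_def.1 hji)
  exact Or.inr <| lt_of_le_of_lt (Fin.le_def.1 (hx.strictMonoOn_ge.monotoneOn hjn hin hji))
    (hi.resolve_left hin.not_gt)

lemma lt_iff_lt_iff (hx : IsMinimal n k x) (i j : Fin N) :
    x i < x j ↔ if ((i : ℕ) < n ↔ (j : ℕ) < n) ∨ ((x i : ℕ) < k ↔ (x j : ℕ) < k)
      then i < j else (x i : ℕ) < k := by
  split_ifs with h
  · rcases h with hn | hk
    · by_cases hi : (i : ℕ) < n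
      · exact hx.strictMonoOn_lt.lt_iff_lt hi (hn.1 hi)
      · exact hx.strictMonoOn_ge.lt_iff_lt (not_lt.1 hi) (not_lt.1 (mt hn.2 hi))
    · by_cases hi : (x i : ℕ) < k
      · simpa using (hx.inv_strictMonoOn_lt.lt_iff_lt hi (hk.1 hi)).symm
      · simpa using (hx.inv_strictMonoOn_ge.lt_iff_lt (not_lt.1 hi) (not_lt.1 (mt hk.2 hi))).symm
  · rw [Fin.lt_def]
    omega

end IsMinimal

lemma IsMinimal.val_lt_iff (hn : n ≤ N) (hk : k ≤ N) (hx : IsMinimal n k x) (hw : IsMinimal n k w)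
    (h : overlap n k x = overlap n k w) (i : Fin N) : (x i : ℕ) < k ↔ (w i : ℕ) < k := by
  have hand : ({i | (i : ℕ) < n ∧ (x i : ℕ) < k} : Finset (Fin N)) =
      ({i | (i : ℕ) < n ∧ (w i : ℕ) < k} : Finset (Fin N)) :=
    eq_of_isLowerSet_of_card_eq (by simpa using hx.isLowerSet_and)
      (by simpa using hw.isLowerSet_and) h
  have hor : ({i | (i : ℕ) < n ∨ (x i : ℕ) < k} : Finset (Fin N)) =
      ({i | (i : ℕ) < n ∨ (w i : ℕ) < k} : Finset (Fin N)) := by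
    refine eq_of_isLowerSet_of_card_eq (by simpa using hx.isLowerSet_or)
      (by simpa using hw.isLowerSet_or) ?_
    have := card_or_add_overlap x hn hk
    have := card_or_add_overlap w hn hk
    omega
  have hand_i := Finset.ext_iff.1 hand i
  have hor_i := Finset.ext_iff.1 hor i
  simp only [Finset.mem_filter, Finset.mem_univ, true_and] at hand_i hor_i
  tauto

lemma IsMinimal.eq_of_overlap_eq (hn : n ≤ N) (hk : k ≤ N) (hx : IsMinimal n k x)
    (hw : IsMinimal n k w) (h : overlap n k x = overlap n k w) : x = w := by
  have hside := IsMinimal.val_lt_iff hn hk hx hw h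
  have hlt (i j : Fin N) : x i < x j ↔ w i < w j := by
    simp only [hx.lt_iff_lt_iff, hw.lt_iff_lt_iff, hside]
  refine mul_inv_eq_one.1 (eq_one_of_strictMono fun a b hab => ?_)
  simpa [hlt] using hab

/-- `w` is the double coset representative `w_r` of the theorem: it swaps the blocks `[r, n)` and
`[n, n + k - r)`. -/
def IsBlockSwap (n k r : ℕ) (w : Equiv.Perm (Fin N)) : Prop :=
  ∀ i : Fin N,
    ((i : ℕ) < r → w i = i) ∧
    (r ≤ (i : ℕ) → (i : ℕ) < n → (w i : ℕ) = (i : ℕ) - r + k) ∧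
    (n ≤ (i : ℕ) → (i : ℕ) < n + k - r → (w i : ℕ) = (i : ℕ) - n + r) ∧
    (n + k - r ≤ (i : ℕ) → w i = i)

namespace IsBlockSwap

variable {r : ℕ}

lemma val_apply (hw : IsBlockSwap n k r w) (i : Fin N) :
    (w i : ℕ) = if (i : ℕ) < r then (i : ℕ) else if (i : ℕ) < n then (i : ℕ) - r + k
      else if (i : ℕ) < n + k - r then (i : ℕ) - n + r else (i : ℕ) := by
  obtain ⟨hfix, hright, hleft, hfix'⟩ := hw i
  split_ifs with hr hn hnk
  · rw [hfix hr]
  · exact hright (not_lt.1 hr) hn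
  · exact hleft (not_lt.1 hn) hnk
  · rw [hfix' (not_lt.1 hnk)]

lemma isMinimal (hw : IsBlockSwap n k r w) (hrn : r ≤ n) (hrk : r ≤ k) : IsMinimal n k w where
  strictMonoOn_lt i hi j hj hij := by
    simp only [Set.mem_ofPred_eq, Fin.lt_def, hw.val_apply] at *
    grind
  strictMonoOn_ge i hi j _ hij := by
    simp only [Set.mem_ofPred_eq, Fin.lt_def, hw.val_apply] at *
    grind
  inv_strictMonoOn_lt a ha b hb hab := by
    obtain ⟨i, rfl⟩ := w.surjective a
    obtain ⟨j, rfl⟩ := w.surjective b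
    simp only [Set.mem_ofPred_eq, Fin.lt_def, hw.val_apply, Equiv.Perm.inv_def,
      Equiv.symm_apply_apply] at *
    grind
  inv_strictMonoOn_ge a ha b hb hab := by
    obtain ⟨i, rfl⟩ := w.surjective a
    obtain ⟨j, rfl⟩ := w.surjective b
    simp only [Set.mem_ofPred_eq, Fin.lt_def, hw.val_apply, Equiv.Perm.inv_def,
      Equiv.symm_apply_apply] at *
    grind

lemma overlap_eq (hw : IsBlockSwap n k r w) (hn : n ≤ N) (hrn : r ≤ n) (hrk : r ≤ k) :
    overlap n k w = r := by
  have hiff (i : Fin N) : (i : ℕ) < n ∧ (w i : ℕ) < k ↔ (i : ℕ) < r := by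
    rw [hw.val_apply]
    grind
  simp only [overlap, hiff]
  exact card_val_lt_of_le (hrn.trans hn)

end IsBlockSwap

end DoubleCosets

section Counting

lemma card_overlap_eq {N n m k l r : ℕ} (hnm : n + m = N) (hkl : k + l = N) (hr : r ≤ n) :
    Finset.card {x : Equiv.Perm (Fin N) | overlap n k x = r} =
      n.factorial * m.factorial * k.choose r * l.choose (n - r) := by
  let initial (a : ℕ) : Finset (Fin N) := {i | (i : ℕ) < a}
  have card_initial {a b : ℕ} (h : a + b = N) : (initial a).card = a ∧ (initial a)ᶜ.card = b := by
    have ha : (initial a).card = a := card_val_lt_of_le (by omega)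
    exact ⟨ha, by rw [Finset.card_compl, Fintype.card_fin, ha]; omega⟩
  have hoverlap (x : Equiv.Perm (Fin N)) :
      overlap n k x = ((initial n).map x.toEmbedding ∩ initial k).card :=
    Finset.card_equiv x (by simp [initial])
  obtain ⟨hn, hm⟩ := card_initial hnm
  obtain ⟨hk, hl⟩ := card_initial hkl
  simp only [hoverlap, card_perm_card_map_inter_eq _ _ (hr.trans_eq hn.symm), hn, hm, hk, hl,
    mul_assoc]

end Counting

section ParabolicDoubleCosets

variable {F : Type*} [Field F] {c d : F} {n : ℕ} {J J' : Set (Fin (n - 1))}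
  {A : Set (Equiv.Perm (Fin n))} {w : Equiv.Perm (Fin n)}

lemma adjoin_mul_span_mul_adjoin_le (hJ : ∀ i ∈ J, ∀ x ∈ A, s n i * x ∈ A)
    (hJ' : ∀ i ∈ J', ∀ x ∈ A, x * s n i ∈ A) (hw : w ∈ A) :
    (Algebra.adjoin F (T F c d n '' J)).toSubmodule * Submodule.span F {Tperm F c d w} *
      (Algebra.adjoin F (T F c d n '' J')).toSubmodule ≤
        Submodule.span F (Tperm F c d '' A) := by
  refine Submodule.mul_le.2 fun y hy b hb => span_image_Tperm_mul_mem hJ' hb ?_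
  refine Submodule.mul_le.2 (fun a ha z hz => mul_mem_span_image_Tperm hJ ha ?_) hy
  exact Submodule.span_mono (Set.singleton_subset_iff.2 (Set.mem_image_of_mem _ hw)) hz

lemma Tperm_mem_of_forall_minimal {M : Submodule F (B F c d n)}
    (hJ : ∀ i ∈ J, ∀ x ∈ A, s n i * x ∈ A) (hJ' : ∀ i ∈ J', ∀ x ∈ A, x * s n i ∈ A)
    (hJM : ∀ i ∈ J, ∀ z ∈ M, T F c d n i * z ∈ M) (hJM' : ∀ i ∈ J', ∀ z ∈ M, z * T F c d n i ∈ M)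
    (hmin : ∀ x ∈ A, (∀ i ∈ J', x (lo i) < x (hi i)) → (∀ i ∈ J, x⁻¹ (lo i) < x⁻¹ (hi i)) →
      Tperm F c d x ∈ M) {x : Equiv.Perm (Fin n)} (hx : x ∈ A) : Tperm F c d x ∈ M := by
  induction hinv : invCount x using Nat.strong_induction_on generalizing x with
  | _ r ih =>
    subst hinv
    by_cases hright : ∃ i ∈ J', x (hi i) < x (lo i)
    · obtain ⟨i, hi, hdesc⟩ := hright
      have hlt : invCount (x * s n i) < invCount x := by
        rw [invCount_mul_s_of_gt hdesc]
        exact Nat.lt_succ_self _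
      have hTperm := Tperm_mul_s (F := F) (c := c) (d := d) (i := i) (x := x * s n i)
        (by rwa [s_mul_cancel_right])
      rw [← s_mul_cancel_right x i, hTperm]
      exact hJM' i hi _ (ih _ hlt (hJ' i hi x hx) rfl)
    by_cases hleft : ∃ i ∈ J, x⁻¹ (hi i) < x⁻¹ (lo i)
    · obtain ⟨i, hi, hdesc⟩ := hleft
      have hlt : invCount (s n i * x) < invCount x := by
        rw [invCount_s_mul_of_gt hdesc]
        exact Nat.lt_succ_self _
      have hTperm := Tperm_s_mul (F := F) (c := c) (d := d) (i := i) (x := s n i * x)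
        (by rwa [s_mul_cancel_left])
      rw [← s_mul_cancel_left i x, hTperm]
      exact hJM i hi _ (ih _ hlt (hJ i hi x hx) rfl)
    push Not at hright hleft
    exact hmin x hx (fun i hi => (lt_or_gt_of_perm x i).resolve_right (hright i hi).not_gt)
      fun i hi => (lt_or_gt_of_perm x⁻¹ i).resolve_right (hleft i hi).not_gt

lemma adjoin_mul_span_mul_adjoin_eq (hJ : ∀ i ∈ J, ∀ x ∈ A, s n i * x ∈ A)
    (hJ' : ∀ i ∈ J', ∀ x ∈ A, x * s n i ∈ A) (hw : w ∈ A)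
    (hmin : ∀ x ∈ A, (∀ i ∈ J', x (lo i) < x (hi i)) → (∀ i ∈ J, x⁻¹ (lo i) < x⁻¹ (hi i)) →
      x = w) :
    (Algebra.adjoin F (T F c d n '' J)).toSubmodule * Submodule.span F {Tperm F c d w} *
      (Algebra.adjoin F (T F c d n '' J')).toSubmodule =
        Submodule.span F (Tperm F c d '' A) := by
  refine le_antisymm (adjoin_mul_span_mul_adjoin_le hJ hJ' hw) (Submodule.span_le.2 ?_)
  rintro _ ⟨x, hx, rfl⟩
  set S := Algebra.adjoin F (T F c d n '' J)
  set S' := Algebra.adjoin F (T F c d n '' J')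
  have hT {K : Set (Fin (n - 1))} {i : Fin (n - 1)} (hi : i ∈ K) :
      T F c d n i ∈ Algebra.adjoin F (T F c d n '' K) :=
    Algebra.subset_adjoin (Set.mem_image_of_mem _ hi)
  refine Tperm_mem_of_forall_minimal hJ hJ' (fun i hi z hz => ?_) (fun i hi z hz => ?_)
    (fun x hx hr hl => ?_) hx
  · rw [mul_assoc, ← S.isIdempotentElem_toSubmodule.eq, mul_assoc]
    rw [mul_assoc] at hz
    exact Submodule.mul_mem_mul (hT hi) hz
  · rw [← S'.isIdempotentElem_toSubmodule.eq, ← mul_assoc]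
    exact Submodule.mul_mem_mul hz (hT hi)
  · have hone : (1 : B F c d n) ∈ S.toSubmodule := S.one_mem
    have hone' : (1 : B F c d n) ∈ S'.toSubmodule := S'.one_mem
    simpa [hmin x hx hr hl] using Submodule.mul_mem_mul
      (Submodule.mul_mem_mul hone (Submodule.mem_span_singleton_self (Tperm F c d w))) hone'

end ParabolicDoubleCosets

section MackeyPieces

variable {F : Type*} [Field F] {c d : F} {n m k l N : ℕ}

lemma range_eq_adjoin_image_T (hkl : k + l = N) (ρ : B F c d k ⊗[F] B F c d l →ₐ[F] B F c d N)
    (hρ₁ : ∀ i : Fin (k - 1), ρ (T F c d k i ⊗ₜ[F] 1) = T F c d N ⟨(i : ℕ), by omega⟩)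
    (hρ₂ : ∀ j : Fin (l - 1), ρ (1 ⊗ₜ[F] T F c d l j) = T F c d N ⟨k + (j : ℕ), by omega⟩) :
    ρ.range = Algebra.adjoin F (T F c d N '' {i | (i : ℕ) + 1 ≠ k}) := by
  have hgen : T F c d N '' {i | (i : ℕ) + 1 ≠ k} =
      ρ.comp Algebra.TensorProduct.includeLeft '' Set.range (T F c d k) ∪
      ρ.comp Algebra.TensorProduct.includeRight '' Set.range (T F c d l) := by
    simp only [← Set.range_comp]
    refine Set.Subset.antisymm ?_ (Set.union_subset ?_ ?_)
    · rintro _ ⟨i, hi, rfl⟩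
      rw [Set.mem_ofPred_eq] at hi
      by_cases hik : (i : ℕ) < k
      · exact Or.inl ⟨⟨i, by omega⟩, hρ₁ _⟩
      · refine Or.inr ⟨⟨i - k, by omega⟩, (hρ₂ _).trans (congrArg _ (Fin.ext ?_))⟩
        exact Nat.add_sub_cancel' (not_lt.1 hik)
    · rintro _ ⟨i, rfl⟩
      exact ⟨_, ne_of_lt (Nat.add_lt_of_lt_sub i.isLt), (hρ₁ i).symm⟩
    · rintro _ ⟨j, rfl⟩
      exact ⟨_, (Nat.lt_succ_of_le (Nat.le_add_right k j)).ne', (hρ₂ j).symm⟩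
  rw [range_eq_range_comp_includeLeft_sup, hgen, Algebra.adjoin_union, ← AlgHom.map_adjoin,
    ← AlgHom.map_adjoin, adjoin_range_T, adjoin_range_T, Algebra.map_top, Algebra.map_top]

variable (F c d n k N) in
/-- The span of the basis elements `T_x` with `x` in the `r`-th double coset of `S_k × S_ℓ` and
`S_n × S_m`; it turns out to be the subspace `B'_r`. -/
def overlapSpan (r : ℕ) : Submodule F (B F c d N) :=
  Submodule.span F (Tperm F c d '' {x | overlap n k x = r})

lemma adjoin_mul_span_mul_adjoin_eq_overlapSpan {r : ℕ} {w : Equiv.Perm (Fin N)} (hn : n ≤ N)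
    (hk : k ≤ N) (hrn : r ≤ n) (hrk : r ≤ k) (hw : IsBlockSwap n k r w) :
    (Algebra.adjoin F (T F c d N '' {i | (i : ℕ) + 1 ≠ k})).toSubmodule *
      Submodule.span F {Tperm F c d w} *
      (Algebra.adjoin F (T F c d N '' {i | (i : ℕ) + 1 ≠ n})).toSubmodule =
        overlapSpan F c d n k N r := by
  have hwr : overlap n k w = r := hw.overlap_eq hn hrn hrk
  refine adjoin_mul_span_mul_adjoin_eq (fun i hi x hx => (overlap_s_mul hi).trans hx)
    (fun i hi x hx => (overlap_mul_s hi).trans hx) hwr fun x hx hright hleft => ?_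
  exact (isMinimal_of_ascents hright hleft).eq_of_overlap_eq hn hk (hw.isMinimal hrn hrk)
    (hx.trans hwr.symm)

lemma isInternal_overlapSpan (hn : n ≤ N) (hkl : k + l = N) :
    DirectSum.IsInternal fun r : {r : ℕ // n - l ≤ r ∧ r ≤ min n k} =>
      overlapSpan F c d n k N r := by
  have hbounds (x : Equiv.Perm (Fin N)) : n - l ≤ overlap n k x ∧ overlap n k x ≤ min n k := by
    have hk : k ≤ N := hkl ▸ Nat.le_add_right k l
    have hle := le_overlap_add x hn hk
    exact ⟨by omega, le_min (overlap_le_left hn) (overlap_le_right hk)⟩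
  let f (x : Equiv.Perm (Fin N)) : {r : ℕ // n - l ≤ r ∧ r ≤ min n k} :=
    ⟨overlap n k x, hbounds x⟩
  have hfiber (r : {r : ℕ // n - l ≤ r ∧ r ≤ min n k}) : {x | overlap n k x = r} = f ⁻¹' {r} :=
    Set.ext fun x => by simp [f, Subtype.ext_iff]
  simp only [overlapSpan, hfiber]
  exact isInternal_span_image_fiber (linearIndependent_Tperm F c d N) (span_range_Tperm F c d N) f

lemma finrank_overlapSpan {r : ℕ} (hnm : n + m = N) (hkl : k + l = N) (hr : r ≤ n) :
    Module.finrank F (overlapSpan F c d n k N r) =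
      n.factorial * m.factorial * k.choose r * l.choose (n - r) := by
  rw [← card_overlap_eq hnm hkl hr, overlapSpan, Set.image_eq_range, ← Fintype.card_subtype]
  exact finrank_span_eq_card ((linearIndependent_Tperm F c d N).comp _ Subtype.val_injective)

end MackeyPieces

end HeckeLikeTower

/-- Mackey-type decomposition for Hecke-like towers: let
`n + m = k + l = N`.  For each `r` with `max(0, n−l) ≤ r ≤ min(n, k)` let `w_r ∈ S_N` be the
double coset representative defined piecewise as in the paper, and let
`B'_r = span_F {ρ_{k,l}(u) · T_{w_r} · ρ_{n,m}(v)}`.  Then `B_N` is the internal direct sum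
of the subspaces `B'_r`, and `dim_F B'_r = n!·m!·C(k,r)·C(l,n−r)`.
Here `ρ_{k,l}` and `ρ_{n,m}` are the external multiplication algebra homomorphisms,
determined by `ρ(T_i ⊗ 1) = T_i`, `ρ(1 ⊗ T_j) = T_{k+j}` (resp. `T_{n+j}`). -/
theorem heckeLike_mackey (F : Type*) [Field F] (c d : F) (n m k l N : ℕ)
    (hnm : n + m = N) (hkl : k + l = N)
    (ρkl : B F c d k ⊗[F] B F c d l →ₐ[F] B F c d N)
    (hρkl₁ : ∀ i : Fin (k - 1),
      ρkl (T F c d k i ⊗ₜ[F] 1) = T F c d N ⟨(i : ℕ), by have := i.isLt; omega⟩)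
    (hρkl₂ : ∀ j : Fin (l - 1),
      ρkl (1 ⊗ₜ[F] T F c d l j) = T F c d N ⟨k + (j : ℕ), by have := j.isLt; omega⟩)
    (ρnm : B F c d n ⊗[F] B F c d m →ₐ[F] B F c d N)
    (hρnm₁ : ∀ i : Fin (n - 1),
      ρnm (T F c d n i ⊗ₜ[F] 1) = T F c d N ⟨(i : ℕ), by have := i.isLt; omega⟩)
    (hρnm₂ : ∀ j : Fin (m - 1),
      ρnm (1 ⊗ₜ[F] T F c d m j) = T F c d N ⟨n + (j : ℕ), by have := j.isLt; omega⟩)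
    (w : ℕ → Equiv.Perm (Fin N))
    (hw : ∀ r, n - l ≤ r → r ≤ min n k → ∀ i : Fin N,
      ((i : ℕ) < r → w r i = i) ∧
      (r ≤ (i : ℕ) → (i : ℕ) < n → ((w r i : ℕ) = (i : ℕ) - r + k)) ∧
      (n ≤ (i : ℕ) → (i : ℕ) < n + k - r → ((w r i : ℕ) = (i : ℕ) - n + r)) ∧
      (n + k - r ≤ (i : ℕ) → w r i = i))
    (lw : ℕ → List (Fin (N - 1)))
    (hlw : ∀ r, n - l ≤ r → r ≤ min n k → IsReducedWord N (w r) (lw r)) :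
    DirectSum.IsInternal (fun r : {r : ℕ // n - l ≤ r ∧ r ≤ min n k} =>
      Submodule.span F {z : B F c d N |
        ∃ u v, z = ρkl u * Tword F c d N (lw r.1) * ρnm v}) ∧
    (∀ r : ℕ, n - l ≤ r → r ≤ min n k →
      Module.finrank F (Submodule.span F {z : B F c d N |
        ∃ u v, z = ρkl u * Tword F c d N (lw r) * ρnm v}) =
      Nat.factorial n * Nat.factorial m * Nat.choose k r * Nat.choose l (n - r)) := by
  have hn : n ≤ N := hnm ▸ Nat.le_add_right n m
  have hk : k ≤ N := hkl ▸ Nat.le_add_right k l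
  have hspan (r : ℕ) (hlr : n - l ≤ r) (hrnk : r ≤ min n k) :
      Submodule.span F {z : B F c d N | ∃ u v, z = ρkl u * Tword F c d N (lw r) * ρnm v} =
        overlapSpan F c d n k N r := by
    obtain ⟨hrn, hrk⟩ := le_min_iff.1 hrnk
    rw [span_map_mul_mul_map, range_eq_adjoin_image_T hkl ρkl hρkl₁ hρkl₂,
      range_eq_adjoin_image_T hnm ρnm hρnm₁ hρnm₂, (hlw r hlr hrnk).Tword_eq_Tperm]
    exact adjoin_mul_span_mul_adjoin_eq_overlapSpan hn hk hrn hrk (hw r hlr hrnk)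
  constructor
  · convert isInternal_overlapSpan hn hkl with r
    exact hspan r r.2.1 r.2.2
  · intro r hlr hrnk
    rw [hspan r hlr hrnk]
    exact finrank_overlapSpan hnm hkl (le_min_iff.1 hrnk).1
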